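/- Let Q be a regular two-sided cell of a fiat category C, let R be a right cell contained in Q and let L be a left cell contained in Q. Then L and R have nonempty intersection: there exists an indecomposable 1-morphism N of C with N in L and N in R. -/

import Mathlib

open CategoryTheory CategoryTheory.Limits

universe w v u

attribute [local instance] CategoryTheory.Limits.hasBinaryBiproducts_of_finite_biproducts

namespace CellTwoRep

variable {C : Type u} [Bicategory.{w, v} C]

/-- `G` is a retract (direct summand) of `F` in a hom-category of the bicategory `C`. -/
def IsSummand {a b : C} (G F : a ⟶ b) : Prop :=
  ∃ (ι : G ⟶ F) (π : F ⟶ G), ι ≫ π = 𝟙 G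

/-- Cast a 1-morphism along equalities of objects. -/
def castHom {a a' b b' : C} (h₁ : a = a') (h₂ : b = b') (f : a ⟶ b) : a' ⟶ b' :=
  h₁ ▸ h₂ ▸ f

section Indec

variable [∀ a b : C, Preadditive (a ⟶ b)] [∀ a b : C, HasFiniteBiproducts (a ⟶ b)]

/-- An indecomposable 1-morphism: nonzero, and any decomposition as a biproduct is trivial. -/
def Indec {a b : C} (F : a ⟶ b) : Prop :=
  ¬ IsZero F ∧ ∀ G H : a ⟶ b, Nonempty (F ≅ G ⊞ H) → IsZero G ∨ IsZero H

end Indec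

/-- A 1-morphism of `C` together with its endpoints. -/
structure OneMor (C : Type u) [Bicategory.{w, v} C] where
  src : C
  tgt : C
  mor : src ⟶ tgt

/-- right preorder: `F ≤_R G` iff `G` is a direct summand of `H ∘ F` for some `H`. -/
def leR (F G : OneMor C) : Prop :=
  ∃ (h : F.src = G.src) (H : F.tgt ⟶ G.tgt),
    IsSummand G.mor (castHom h rfl F.mor ≫ H)

/-- left preorder: `F ≤_L G` iff `G` is a direct summand of `F ∘ H` for some `H`. -/
def leL (F G : OneMor C) : Prop :=
  ∃ (h : F.tgt = G.tgt) (H : G.src ⟶ F.src),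
    IsSummand G.mor (H ≫ castHom rfl h F.mor)

/-- two-sided preorder: `F ≤_LR G` iff `G` is a direct summand of `H₂ ∘ F ∘ H₁`. -/
def leLR (F G : OneMor C) : Prop :=
  ∃ (H₁ : G.src ⟶ F.src) (H₂ : F.tgt ⟶ G.tgt),
    IsSummand G.mor (H₁ ≫ F.mor ≫ H₂)

def simR (F G : OneMor C) : Prop := leR F G ∧ leR G F
def simL (F G : OneMor C) : Prop := leL F G ∧ leL G F
def simLR (F G : OneMor C) : Prop := leLR F G ∧ leLR G F

/-- Isomorphism of 1-morphisms (with possibly different, but equal, endpoints). -/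
def IsoM (F G : OneMor C) : Prop :=
  ∃ (h₁ : F.src = G.src) (h₂ : F.tgt = G.tgt), Nonempty (castHom h₁ h₂ F.mor ≅ G.mor)

section Cells

variable [∀ a b : C, Preadditive (a ⟶ b)] [∀ a b : C, HasFiniteBiproducts (a ⟶ b)]

def IndecM (F : OneMor C) : Prop := Indec F.mor

/-- A right cell: the `∼_R`-equivalence class of some indecomposable 1-morphism. -/
def IsRightCell (R : Set (OneMor C)) : Prop :=
  ∃ F : OneMor C, IndecM F ∧ R = {G | IndecM G ∧ simR F G}

def IsLeftCell (L : Set (OneMor C)) : Prop :=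
  ∃ F : OneMor C, IndecM F ∧ L = {G | IndecM G ∧ simL F G}

def IsTwoSidedCell (Q : Set (OneMor C)) : Prop :=
  ∃ F : OneMor C, IndecM F ∧ Q = {G | IndecM G ∧ simLR F G}

/-- The right order on cells. -/
def cellLeR (R R' : Set (OneMor C)) : Prop := ∃ F ∈ R, ∃ G ∈ R', leR F G

/-- The left order on cells. -/
def cellLeL (L L' : Set (OneMor C)) : Prop := ∃ F ∈ L, ∃ G ∈ L', leL F G

/-- A regular two-sided cell: distinct right cells inside it are incomparable for `≤_R`. -/
def IsRegular (Q : Set (OneMor C)) : Prop :=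
  IsTwoSidedCell Q ∧ ∀ R R' : Set (OneMor C), IsRightCell R → IsRightCell R' →
    R ⊆ Q → R' ⊆ Q → R ≠ R' → ¬ cellLeR R R' ∧ ¬ cellLeR R' R

/-- A strongly regular two-sided cell: regular, and every left cell meets every right cell
inside it in exactly one isomorphism class. -/
def IsStronglyRegular (Q : Set (OneMor C)) : Prop :=
  IsRegular Q ∧ ∀ L R : Set (OneMor C), IsLeftCell L → IsRightCell R → L ⊆ Q → R ⊆ Q →
    ∃ F, F ∈ L ∩ R ∧ ∀ G, G ∈ L ∩ R → IsoM F G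

end Cells

/-- All the axioms of a fiat (`k`-finitary with involution and adjunctions) 2-category,
on top of a strict bicategory whose hom-categories are additive and `k`-linear. -/
structure FiatAxioms (k : Type*) [Field k] [IsAlgClosed k]
    (C : Type u) [Bicategory.{w, v} C] [Bicategory.Strict C]
    [∀ a b : C, Preadditive (a ⟶ b)] [∀ a b : C, HasFiniteBiproducts (a ⟶ b)]
    [∀ a b : C, Linear k (a ⟶ b)] : Type (max u v w) where
  /-- finitely many objects -/
  finObj : Finite C
  /-- each hom-category is idempotent complete -/
  idemComplete : ∀ a b : C, IsIdempotentComplete (a ⟶ b)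
  /-- finite-dimensional spaces of 2-morphisms -/
  finDim : ∀ (a b : C) (f g : a ⟶ b), FiniteDimensional k (f ⟶ g)
  /-- finitely many isomorphism classes of indecomposable 1-morphisms -/
  finIndec : ∀ a b : C, ∃ (n : ℕ) (ι : Fin n → (a ⟶ b)),
      ∀ F : a ⟶ b, Indec F → ∃ i, Nonempty (F ≅ ι i)
  /-- each identity 1-morphism is indecomposable -/
  idIndec : ∀ a : C, Indec (𝟙 a)
  /-- horizontal composition is additive in the second variable -/
  whiskerLeft_add : ∀ {a b c : C} (f : a ⟶ b) {g h : b ⟶ c} (η θ : g ⟶ h),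
      Bicategory.whiskerLeft f (η + θ) =
        Bicategory.whiskerLeft f η + Bicategory.whiskerLeft f θ
  /-- horizontal composition is additive in the first variable -/
  whiskerRight_add : ∀ {a b c : C} {f g : a ⟶ b} (η θ : f ⟶ g) (h : b ⟶ c),
      Bicategory.whiskerRight (η + θ) h =
        Bicategory.whiskerRight η h + Bicategory.whiskerRight θ h
  /-- the involution on 1-morphisms -/
  star : ∀ {a b : C}, (a ⟶ b) → (b ⟶ a)
  /-- the involution on 2-morphisms -/
  star2 : ∀ {a b : C} {f g : a ⟶ b}, (f ⟶ g) → (star f ⟶ star g)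
  star2_id : ∀ {a b : C} (f : a ⟶ b), star2 (𝟙 f) = 𝟙 (star f)
  star2_comp : ∀ {a b : C} {f g h : a ⟶ b} (η : f ⟶ g) (θ : g ⟶ h),
      star2 (η ≫ θ) = star2 η ≫ star2 θ
  /-- the involution is a weak anti-homomorphism -/
  starComp : ∀ {a b c : C} (f : a ⟶ b) (g : b ⟶ c),
      Nonempty (star (f ≫ g) ≅ star g ≫ star f)
  starId : ∀ a : C, Nonempty (star (𝟙 a) ≅ 𝟙 a)
  /-- the involution is weakly involutive -/
  starStar : ∀ {a b : C} (f : a ⟶ b), Nonempty (star (star f) ≅ f)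
  /-- adjunctions: every 1-morphism `f` is left adjoint to `star f` -/
  adj : ∀ {a b : C} (f : a ⟶ b), Nonempty (Bicategory.Adjunction f (star f))

/-!
Let `F` generate `R` and `G` generate `L`. As `F ∼_LR G`, the 1-morphism `G` is a summand of
`H₁ ≫ (F.mor ≫ H₂)` for some `H₁` and `H₂`. Since `End G` is local, `G` is already a summand of
`H₁ ≫ N` for some indecomposable summand `N` of `F.mor ≫ H₂`, so that `F ≤_R N ≤_L G` and `N ∈ Q`.
Regularity turns `F ≤_R N` into `F ∼_R N`. Taking right adjoints exchanges `≤_L` with `≤_R` and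
preserves `Q`, so regularity also turns `N ≤_L G` into `N ∼_L G`.
-/

open Bicategory

section LocalRing

/-- By Fitting's lemma, the kernel and the range of some power of `f` are complementary, so the
projection between them is one of the trivial idempotents. -/
theorem isNilpotent_or_isUnit_moduleEnd {R M : Type*} [Ring R] [AddCommGroup M] [Module R M]
    [IsArtinian R M] [IsNoetherian R M]
    (h : ∀ e : Module.End R M, IsIdempotentElem e → e = 0 ∨ e = 1) (f : Module.End R M) :
    IsNilpotent f ∨ IsUnit f := by
  obtain ⟨n, hn, hn0⟩ :=
    (f.eventually_isCompl_ker_pow_range_pow.and (Filter.eventually_ne_atTop 0)).exists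
  rcases h _ (Submodule.isIdempotentElem_projection hn) with he | he
  · right
    have hker : LinearMap.ker (f ^ n) = ⊥ := by
      rw [← Submodule.range_projection hn, he, LinearMap.range_zero]
    have hrange : LinearMap.range (f ^ n) = ⊤ := by
      rw [← Submodule.ker_projection hn, he, LinearMap.ker_zero]
    exact (isUnit_pow_iff hn0).1
      ((Module.End.isUnit_iff _).2 ⟨LinearMap.ker_eq_bot.1 hker, LinearMap.range_eq_top.1 hrange⟩)
  · left
    refine ⟨n, LinearMap.ker_eq_top.1 ?_⟩
    rw [← Submodule.range_projection hn, he, Module.End.one_eq_id, LinearMap.range_id]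

theorem isLocalRing_of_isArtinianRing {A : Type*} [Ring A] [Nontrivial A] [IsArtinianRing A]
    (h : ∀ e : A, IsIdempotentElem e → e = 0 ∨ e = 1) : IsLocalRing A := by
  refine .of_isUnit_or_isUnit_one_sub_self fun x => ?_
  let φ := RingEquiv.moduleEndSelf A
  have hEnd (e : Module.End A A) (he : IsIdempotentElem e) : e = 0 ∨ e = 1 := by
    simpa using h (φ.symm e).unop (congrArg MulOpposite.unop (he.map φ.symm))
  rcases isNilpotent_or_isUnit_moduleEnd hEnd (φ (.op x)) with hx | hx
  · obtain ⟨n, hn⟩ : IsNilpotent (MulOpposite.op x) := by simpa using hx.map φ.symm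
    exact .inr (IsNilpotent.isUnit_one_sub ⟨n, congrArg MulOpposite.unop hn⟩)
  · exact .inl (by simpa using hx)

end LocalRing

theorem nonempty_retract_of_isUnit {D : Type*} [Category D] {G K : D} (i : G ⟶ K) (p : K ⟶ G)
    (h : IsUnit (End.of (i ≫ p))) : Nonempty (Retract G K) := by
  obtain ⟨t, ht⟩ := h.exists_left_inv
  exact ⟨i, p ≫ t.asHom, by simpa using congrArg End.asHom ht⟩

section Preadditive

variable {D : Type*} [Category D] [Preadditive D]

section Biproducts

variable [HasBinaryBiproducts D]

/-- The biproduct decomposition of `X` given by two complementary retracts, i.e. retracts whose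
idempotents add up to the identity. -/
noncomputable def isoBiprodOfRetracts {X Y Z : D} (r : Retract Y X) (s : Retract Z X)
    (h : r.r ≫ r.i + s.r ≫ s.i = 𝟙 X) : X ≅ Y ⊞ Z where
  hom := biprod.lift r.r s.r
  inv := biprod.desc r.i s.i
  hom_inv_id := by rw [biprod.lift_desc, h]
  inv_hom_id := by
    have hrs : r.i ≫ s.r = 0 := by simpa using congr(r.i ≫ $h ≫ s.r)
    have hsr : s.i ≫ r.r = 0 := by simpa using congr(s.i ≫ $h ≫ r.r)
    ext <;> simp [hrs, hsr]

theorem eq_zero_or_eq_id_of_indecomposable [IsIdempotentComplete D] {X : D}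
    (hX : Indecomposable X) (e : X ⟶ X) (he : e ≫ e = e) : e = 0 ∨ e = 𝟙 X := by
  obtain ⟨Y, i, p, hip, hpi⟩ := IsIdempotentComplete.idempotents_split X e he
  obtain ⟨Z, j, q, hjq, hqj⟩ := IsIdempotentComplete.idempotents_split X (𝟙 X - e) (by simp [he])
  rcases hX.2 Y Z (isoBiprodOfRetracts ⟨i, p, hip⟩ ⟨j, q, hjq⟩ (by simp [hpi, hqj])) with h | h
  · exact .inl (by rw [← hpi, h.eq_of_tgt p 0, zero_comp])
  · exact .inr (by rw [eq_comm, ← sub_eq_zero, ← hqj, h.eq_of_tgt q 0, zero_comp])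

theorem indecomposable_of_eq_zero_or_eq_id {X : D} (hX : ¬ IsZero X)
    (h : ∀ e : X ⟶ X, e ≫ e = e → e = 0 ∨ e = 𝟙 X) : Indecomposable X := by
  refine ⟨hX, fun Y Z φ => ?_⟩
  rcases h (φ.hom ≫ biprod.fst ≫ biprod.inl ≫ φ.inv) (by simp) with h | h
  · left
    rw [IsZero.iff_id_eq_zero]
    simpa using congr(biprod.inl ≫ φ.inv ≫ $h ≫ φ.hom ≫ biprod.fst)
  · right
    rw [IsZero.iff_id_eq_zero]
    simpa using congr(biprod.inr ≫ φ.inv ≫ $h ≫ φ.hom ≫ biprod.snd).symm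

theorem isLocalRing_end_of_indecomposable [IsIdempotentComplete D] {X : D} [IsArtinianRing (End X)]
    (hX : Indecomposable X) : IsLocalRing (End X) := by
  have : Nontrivial (End X) := ⟨𝟙 X, 0, mt (IsZero.iff_id_eq_zero X).2 hX.1⟩
  exact isLocalRing_of_isArtinianRing (eq_zero_or_eq_id_of_indecomposable hX)

theorem nonempty_retract_or_nonempty_retract_of_biprod {G A B : D} [IsLocalRing (End G)]
    (r : Retract G (A ⊞ B)) : Nonempty (Retract G A) ∨ Nonempty (Retract G B) := by
  have hsum : (r.i ≫ biprod.fst) ≫ biprod.inl ≫ r.r + (r.i ≫ biprod.snd) ≫ biprod.inr ≫ r.r =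
      𝟙 G := by
    have := congr(r.i ≫ $(biprod.total (X := A) (Y := B)) ≫ r.r)
    simpa only [Preadditive.add_comp, Preadditive.comp_add, Category.assoc, Category.id_comp,
      r.retract] using this
  exact (IsLocalRing.isUnit_or_isUnit_of_add_one (R := End G) hsum).imp
    (nonempty_retract_of_isUnit _ _) (nonempty_retract_of_isUnit _ _)

end Biproducts

/-- The idempotent endomorphism of `X` with image the retract `Y`. The left ideal it generates
serves as a measure of the size of `Y` when `End X` is Artinian. -/
def retractIdempotent {X Y : D} (r : Retract Y X) : End X := r.r ≫ r.i

theorem eq_zero_of_span_retractIdempotent_le {X Y A B : D} (r : Retract Y X) (s : Retract A Y)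
    (h : Ideal.span {retractIdempotent r} ≤ Ideal.span {retractIdempotent (s.trans r)})
    {t : B ⟶ Y} (ht : t ≫ s.r = 0) : t = 0 := by
  obtain ⟨c, hc⟩ := Ideal.mem_span_singleton'.1 (h (Ideal.mem_span_singleton_self _))
  replace hc : (r.r ≫ s.r) ≫ (s.i ≫ r.i) ≫ c = r.r ≫ r.i := by
    simpa [retractIdempotent, End.mul_def] using hc
  calc t = t ≫ r.i ≫ (r.r ≫ r.i) ≫ r.r := by simp
    _ = t ≫ s.r ≫ (s.i ≫ r.i) ≫ c ≫ r.r := by rw [← hc]; simp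
    _ = 0 := by rw [reassoc_of% ht, zero_comp]

variable [HasBinaryBiproducts D]

theorem exists_indecomposable_retract {X : D} [IsArtinianRing (End X)]
    (P : D → Prop) (hX : P X) (hzero : ∀ Y, P Y → ¬ IsZero Y)
    (hbiprod : ∀ Y A B, P Y → (Y ≅ A ⊞ B) → P A ∨ P B) :
    ∃ Y, Indecomposable Y ∧ P Y ∧ Nonempty (Retract Y X) := by
  obtain ⟨⟨Y, r⟩, hY, hmin⟩ := exists_minimalFor_of_wellFoundedLT
    (fun s : Σ Y, Retract Y X => P s.1) (fun s => Ideal.span {retractIdempotent s.2})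
    ⟨⟨X, .refl X⟩, hX⟩
  have le_of_retract {A : D} (s : Retract A Y) (hA : P A) :
      Ideal.span {retractIdempotent r} ≤ Ideal.span {retractIdempotent (s.trans r)} := by
    refine hmin (j := ⟨A, s.trans r⟩) hA ((Ideal.span_singleton_le_iff_mem _).2
      (Ideal.mem_span_singleton'.2 ⟨retractIdempotent (s.trans r), ?_⟩))
    simp [retractIdempotent, End.mul_def]
  have isZero_right {A B : D} (φ : Y ≅ A ⊞ B) (hA : P A) : IsZero B := by
    let s : Retract A Y := ⟨biprod.inl ≫ φ.inv, φ.hom ≫ biprod.fst, by simp⟩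
    have hB : biprod.inr ≫ φ.inv = 0 :=
      eq_zero_of_span_retractIdempotent_le r s (le_of_retract s hA) (by simp [s])
    rw [IsZero.iff_id_eq_zero]
    simpa using congr($hB ≫ φ.hom ≫ biprod.snd)
  exact ⟨Y, ⟨hzero Y hY, fun A B φ => (hbiprod Y A B hY φ).symm.imp
    (isZero_right (φ ≪≫ biprod.braiding A B)) (isZero_right φ)⟩, hY, ⟨r⟩⟩

theorem exists_indecomposable_retract_map {E : Type*} [Category E] [Preadditive E]
    [HasBinaryBiproducts E] (T : D ⥤ E) [T.PreservesZeroMorphisms]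
    [PreservesBinaryBiproducts T] {X : D} [IsArtinianRing (End X)] {G : E}
    [IsLocalRing (End G)] (r : Retract G (T.obj X)) :
    ∃ Y, Indecomposable Y ∧ Nonempty (Retract G (T.obj Y)) ∧ Nonempty (Retract Y X) := by
  have hG : ¬ IsZero G := fun h => one_ne_zero (α := End G) (h.eq_of_src _ _)
  refine exists_indecomposable_retract (fun Y => Nonempty (Retract G (T.obj Y))) ⟨r⟩
    (fun Y ⟨s⟩ hY => hG (.of_mono s.i (T.map_isZero hY))) fun Y A B ⟨s⟩ φ => ?_
  exact nonempty_retract_or_nonempty_retract_of_biprod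
    (s.trans (.ofIso (T.mapIso φ ≪≫ T.mapBiprod A B)))

end Preadditive

section Adjoints

variable {a b : C}

/-- Replace the right adjoint of an adjunction by an isomorphic 1-morphism. -/
def adjunctionOfIsoRight {l : a ⟶ b} {r r' : b ⟶ a} (adj : Bicategory.Adjunction l r)
    (e : r ≅ r') : Bicategory.Adjunction l r' where
  unit := adj.unit ≫ l ◁ e.hom
  counit := e.inv ▷ l ≫ adj.counit
  left_triangle :=
    calc
      _ = adj.unit ▷ l ⊗≫ l ◁ ((e.hom ≫ e.inv) ▷ l) ⊗≫ l ◁ adj.counit := by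
        bicategory
      _ = leftZigzag adj.unit adj.counit := by
        rw [e.hom_inv_id]
        bicategory
      _ = _ := adj.left_triangle
  right_triangle :=
    calc
      _ = r' ◁ adj.unit ⊗≫ (r' ◁ l ◁ e.hom ≫ e.inv ▷ (l ≫ r')) ⊗≫ adj.counit ▷ r' := by
        bicategory
      _ = (r' ◁ adj.unit ≫ e.inv ▷ (l ≫ r)) ⊗≫ ((r ≫ l) ◁ e.hom ≫ adj.counit ▷ r') := by
        rw [whisker_exchange]
        bicategory
      _ = e.inv ▷ 𝟙 a ≫ rightZigzag adj.unit adj.counit ≫ 𝟙 b ◁ e.hom := by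
        rw [whisker_exchange, whisker_exchange]
        bicategory
      _ = _ := by
        rw [adj.right_triangle]
        simp

open Bicategory.Adjunction in
/-- The adjunction `r ≫ - ⊣ l ≫ -` between hom-categories induced by an adjunction `l ⊣ r`. -/
def precompAdjunction (c : C) {l : a ⟶ b} {r : b ⟶ a} (adj : Bicategory.Adjunction l r) :
    precomp c r ⊣ precomp c l :=
  .mkOfHomEquiv
    { homEquiv _ _ := adj.homEquiv₁.symm
      homEquiv_naturality_left_symm η (θ : _ ⟶ l ≫ _) :=
        show adj.homEquiv₁ (η ≫ θ) = r ◁ η ≫ adj.homEquiv₁ θ by simp [homEquiv₁_apply]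
      homEquiv_naturality_right (η : r ≫ _ ⟶ _) θ :=
        show adj.homEquiv₁.symm (η ≫ θ) = adj.homEquiv₁.symm η ≫ l ◁ θ by
          simp [homEquiv₁_symm_apply] }

open Bicategory.Adjunction in
/-- The adjunction `- ≫ l ⊣ - ≫ r` between hom-categories induced by an adjunction `l ⊣ r`. -/
def postcompAdjunction (c : C) {l : a ⟶ b} {r : b ⟶ a} (adj : Bicategory.Adjunction l r) :
    postcomp c l ⊣ postcomp c r :=
  .mkOfHomEquiv
    { homEquiv _ _ := adj.homEquiv₂
      homEquiv_naturality_left_symm η (θ : _ ⟶ _ ≫ r) :=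
        show adj.homEquiv₂.symm (η ≫ θ) = η ▷ l ≫ adj.homEquiv₂.symm θ by
          simp [homEquiv₂_symm_apply]
      homEquiv_naturality_right (η : _ ≫ l ⟶ _) θ :=
        show adj.homEquiv₂ (η ≫ θ) = adj.homEquiv₂ η ≫ θ ▷ r by simp [homEquiv₂_apply] }

instance isRightAdjoint_precomp (c : C) (f : a ⟶ b) [IsLeftAdjoint f] :
    (precomp c f).IsRightAdjoint :=
  (precompAdjunction c (.ofIsLeftAdjoint f)).isRightAdjoint

instance isLeftAdjoint_postcomp (c : C) (f : a ⟶ b) [IsLeftAdjoint f] :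
    (postcomp c f).IsLeftAdjoint :=
  (postcompAdjunction c (.ofIsLeftAdjoint f)).isLeftAdjoint

variable [∀ a b : C, Preadditive (a ⟶ b)]

theorem conjugateEquiv_symm_zero {l₁ l₂ : a ⟶ b} {r₁ r₂ : b ⟶ a}
    (adj₁ : Bicategory.Adjunction l₁ r₁) (adj₂ : Bicategory.Adjunction l₂ r₂) :
    (conjugateEquiv adj₁ adj₂).symm 0 = 0 := by
  have := IsLeftAdjoint.mk adj₁
  have := IsLeftAdjoint.mk adj₂
  have whiskerRight_zero : (0 : r₁ ⟶ r₂) ▷ l₂ = 0 := (postcomp b l₂).map_zero r₁ r₂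
  have whiskerLeft_zero : l₁ ◁ (0 : r₁ ≫ l₂ ⟶ r₂ ≫ l₂) = 0 := (precomp b l₁).map_zero _ _
  simp [conjugateEquiv_symm_apply', whiskerRight_zero, whiskerLeft_zero]

variable [∀ a b : C, HasFiniteBiproducts (a ⟶ b)]

instance preservesBinaryBiproducts_precomp (c : C) (f : a ⟶ b) [IsLeftAdjoint f] :
    PreservesBinaryBiproducts (precomp c f) := by
  have := (Adjunction.ofIsRightAdjoint (precomp c f)).rightAdjoint_preservesLimits.{0, 0}
  exact preservesBinaryBiproducts_of_preservesBinaryProducts _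

theorem indecomposable_of_adjunction {l : a ⟶ b} {r : b ⟶ a} [IsIdempotentComplete (a ⟶ b)]
    (adj : Bicategory.Adjunction l r) (hl : Indecomposable l) : Indecomposable r := by
  let conj := conjugateEquiv adj adj
  have conj_id : conj.symm (𝟙 r) = 𝟙 l := conjugateEquiv_symm_id adj
  have conj_zero : conj.symm 0 = 0 := conjugateEquiv_symm_zero adj adj
  refine indecomposable_of_eq_zero_or_eq_id (fun hr => hl.1 ?_) fun e he => ?_
  · rw [IsZero.iff_id_eq_zero, ← conj_id, hr.eq_of_src (𝟙 r) 0, conj_zero]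
  · have hidem : conj.symm e ≫ conj.symm e = conj.symm e := by
      rw [Bicategory.conjugateEquiv_symm_comp, he]
    exact (eq_zero_or_eq_id_of_indecomposable hl _ hidem).imp
      (fun h => conj.symm.injective (h.trans conj_zero.symm))
      (fun h => conj.symm.injective (h.trans conj_id.symm))

end Adjoints

section Summand

variable {a b c : C}

theorem isSummand_iff_nonempty_retract {F G : a ⟶ b} : IsSummand G F ↔ Nonempty (Retract G F) :=
  ⟨fun ⟨i, r, h⟩ => ⟨i, r, h⟩, fun ⟨r⟩ => ⟨r.i, r.r, r.retract⟩⟩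

theorem IsSummand.of_iso {F G : a ⟶ b} (e : F ≅ G) : IsSummand F G :=
  ⟨e.hom, e.inv, e.hom_inv_id⟩

theorem IsSummand.trans {F G H : a ⟶ b} (h : IsSummand F G) (h' : IsSummand G H) :
    IsSummand F H := by
  obtain ⟨i, p, hip⟩ := h
  obtain ⟨j, q, hjq⟩ := h'
  exact ⟨i ≫ j, q ≫ p, by rw [Category.assoc, reassoc_of% hjq, hip]⟩

theorem IsSummand.comp_left (H : a ⟶ b) {F G : b ⟶ c} (h : IsSummand F G) :
    IsSummand (H ≫ F) (H ≫ G) := by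
  obtain ⟨i, p, hip⟩ := h
  exact ⟨H ◁ i, H ◁ p, by rw [← whiskerLeft_comp, hip, whiskerLeft_id]⟩

theorem IsSummand.comp_right {F G : a ⟶ b} (h : IsSummand F G) (H : b ⟶ c) :
    IsSummand (F ≫ H) (G ≫ H) := by
  obtain ⟨i, p, hip⟩ := h
  exact ⟨i ▷ H, p ▷ H, by rw [← comp_whiskerRight, hip, id_whiskerRight]⟩

theorem isSummand_comp_of_adjunction_left {l : a ⟶ b} {r : b ⟶ a}
    (adj : Bicategory.Adjunction l r) : IsSummand l (l ≫ r ≫ l) := by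
  refine ⟨(λ_ l).inv ≫ adj.unit ▷ l ≫ (α_ _ _ _).hom, l ◁ adj.counit ≫ (ρ_ l).hom, ?_⟩
  calc _ = (λ_ l).inv ≫ leftZigzag adj.unit adj.counit ≫ (ρ_ l).hom := by
        simp [leftZigzag, bicategoricalComp]
    _ = 𝟙 l := by rw [adj.left_triangle]; simp

theorem isSummand_comp_of_adjunction_right {l : a ⟶ b} {r : b ⟶ a}
    (adj : Bicategory.Adjunction l r) : IsSummand r (r ≫ l ≫ r) := by
  refine ⟨(ρ_ r).inv ≫ r ◁ adj.unit, (α_ _ _ _).inv ≫ adj.counit ▷ r ≫ (λ_ r).hom, ?_⟩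
  calc _ = (ρ_ r).inv ≫ rightZigzag adj.unit adj.counit ≫ (λ_ r).hom := by
        simp [rightZigzag, bicategoricalComp]
    _ = 𝟙 r := by rw [adj.right_triangle]; simp

theorem isSummand_right_iff_isSummand_left {l₁ l₂ : a ⟶ b} {r₁ r₂ : b ⟶ a}
    (adj₁ : Bicategory.Adjunction l₁ r₁) (adj₂ : Bicategory.Adjunction l₂ r₂) :
    IsSummand r₁ r₂ ↔ IsSummand l₁ l₂ := by
  constructor
  · rintro ⟨i, p, hip⟩
    refine ⟨(conjugateEquiv adj₂ adj₁).symm p, (conjugateEquiv adj₁ adj₂).symm i, ?_⟩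
    rw [Bicategory.conjugateEquiv_symm_comp, hip, Bicategory.conjugateEquiv_symm_id]
  · rintro ⟨i, p, hip⟩
    refine ⟨conjugateEquiv adj₁ adj₂ p, conjugateEquiv adj₂ adj₁ i, ?_⟩
    rw [Bicategory.conjugateEquiv_comp, hip, Bicategory.conjugateEquiv_id]

end Summand

section Preorders

variable {F G K : OneMor C}

theorem leR.refl (F : OneMor C) : leR F F :=
  ⟨rfl, 𝟙 _, .of_iso (ρ_ F.mor).symm⟩

theorem leL.refl (F : OneMor C) : leL F F :=
  ⟨rfl, 𝟙 _, .of_iso (λ_ F.mor).symm⟩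

theorem leLR.trans (h : leLR F G) (h' : leLR G K) : leLR F K := by
  obtain ⟨H₁, H₂, hH⟩ := h
  obtain ⟨H₁', H₂', hH'⟩ := h'
  refine ⟨H₁' ≫ H₁, H₂ ≫ H₂', hH'.trans (((hH.comp_right H₂').comp_left H₁').trans (.of_iso ?_))⟩
  exact whiskerLeftIso H₁' (α_ _ _ _ ≪≫ whiskerLeftIso H₁ (α_ _ _ _)) ≪≫ (α_ _ _ _).symm

theorem leR.leLR (h : leR F G) : leLR F G := by
  obtain ⟨a, b, f⟩ := F
  obtain ⟨a', c, g⟩ := G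
  obtain ⟨rfl : a = a', H, hH⟩ := h
  exact ⟨𝟙 _, H, hH.trans (.of_iso (λ_ _).symm)⟩

theorem leL.leLR (h : leL F G) : leLR F G := by
  obtain ⟨a, b, f⟩ := F
  obtain ⟨c, b', g⟩ := G
  obtain ⟨rfl : b = b', H, hH⟩ := h
  exact ⟨H, 𝟙 _, hH.trans ((IsSummand.of_iso (ρ_ _).symm).trans (.of_iso (α_ _ _ _)))⟩

theorem simLR.symm (h : simLR F G) : simLR G F := ⟨h.2, h.1⟩

theorem simLR.trans (h : simLR F G) (h' : simLR G K) : simLR F K :=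
  ⟨h.1.trans h'.1, h'.2.trans h.2⟩

theorem simR.simLR (h : simR F G) : simLR F G := ⟨h.1.leLR, h.2.leLR⟩

end Preorders

section RightAdjoints

/-- The chosen right adjoint of a 1-morphism, bundled with its endpoints. -/
noncomputable def OneMor.rightAdj (F : OneMor C) [IsLeftAdjoint F.mor] : OneMor C :=
  ⟨F.tgt, F.src, rightAdjoint F.mor⟩

theorem simLR_rightAdj (F : OneMor C) [IsLeftAdjoint F.mor] : simLR F F.rightAdj :=
  let adj := Bicategory.Adjunction.ofIsLeftAdjoint F.mor
  let r := rightAdjoint F.mor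
  ⟨⟨r, r, isSummand_comp_of_adjunction_right adj⟩,
    ⟨F.mor, F.mor, isSummand_comp_of_adjunction_left adj⟩⟩

theorem leR_rightAdj_iff [∀ {a b : C} (f : a ⟶ b), IsLeftAdjoint f]
    [∀ {a b : C} (f : a ⟶ b), IsRightAdjoint f] {F G : OneMor C} :
    leR F.rightAdj G.rightAdj ↔ leL F G := by
  obtain ⟨a, b, f⟩ := F
  obtain ⟨c, b', g⟩ := G
  let adjF := Bicategory.Adjunction.ofIsLeftAdjoint f
  constructor
  · rintro ⟨rfl : b = b', (H : a ⟶ c), hH⟩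
    exact ⟨rfl, leftAdjoint H, (isSummand_right_iff_isSummand_left (.ofIsLeftAdjoint g)
      ((Bicategory.Adjunction.ofIsRightAdjoint H).comp adjF)).1 hH⟩
  · rintro ⟨rfl : b = b', (H : c ⟶ a), hH⟩
    exact ⟨rfl, (rightAdjoint H : a ⟶ c), (isSummand_right_iff_isSummand_left (.ofIsLeftAdjoint g)
      ((Bicategory.Adjunction.ofIsLeftAdjoint H).comp adjF)).2 hH⟩

end RightAdjoints

section Cells

variable [∀ a b : C, Preadditive (a ⟶ b)] [∀ a b : C, HasFiniteBiproducts (a ⟶ b)]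

theorem indec_iff_indecomposable {a b : C} {F : a ⟶ b} : Indec F ↔ Indecomposable F :=
  and_congr_right fun _ => forall₂_congr fun _ _ => Nonempty.forall

theorem IsTwoSidedCell.indecM {Q : Set (OneMor C)} (hQ : IsTwoSidedCell Q) {F : OneMor C}
    (hF : F ∈ Q) : IndecM F := by
  obtain ⟨E, -, rfl⟩ := hQ
  exact hF.1

theorem IsTwoSidedCell.simLR {Q : Set (OneMor C)} (hQ : IsTwoSidedCell Q) {F G : OneMor C}
    (hF : F ∈ Q) (hG : G ∈ Q) : simLR F G := by
  obtain ⟨E, -, rfl⟩ := hQ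
  exact hF.2.symm.trans hG.2

theorem IsTwoSidedCell.mem_of_simLR {Q : Set (OneMor C)} (hQ : IsTwoSidedCell Q) {F G : OneMor C}
    (hF : F ∈ Q) (hG : IndecM G) (h : CellTwoRep.simLR F G) : G ∈ Q := by
  obtain ⟨E, -, rfl⟩ := hQ
  exact ⟨hG, hF.2.trans h⟩

theorem IsRegular.simR_of_leR {Q : Set (OneMor C)} (hQ : IsRegular Q) {F G : OneMor C}
    (hF : F ∈ Q) (hG : G ∈ Q) (h : leR F G) : simR F G := by
  have mem_self {K : OneMor C} (hK : K ∈ Q) : K ∈ {M | IndecM M ∧ simR K M} :=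
    ⟨hQ.1.indecM hK, .refl K, .refl K⟩
  have subset {K : OneMor C} (hK : K ∈ Q) : {M | IndecM M ∧ simR K M} ⊆ Q :=
    fun M hM => hQ.1.mem_of_simLR hK hM.1 hM.2.simLR
  by_contra hne
  refine (hQ.2 _ _ ⟨F, hQ.1.indecM hF, rfl⟩ ⟨G, hQ.1.indecM hG, rfl⟩ (subset hF) (subset hG)
    fun heq => hne ?_).1 ⟨F, mem_self hF, G, mem_self hG, h⟩
  exact (heq.symm ▸ mem_self hG : G ∈ {M | IndecM M ∧ simR F M}).2

variable [∀ a b : C, IsIdempotentComplete (a ⟶ b)]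
  [∀ {a b : C} (f : a ⟶ b), IsLeftAdjoint f] [∀ {a b : C} (f : a ⟶ b), IsRightAdjoint f]

theorem IsRegular.simL_of_leL {Q : Set (OneMor C)} (hQ : IsRegular Q) {F G : OneMor C}
    (hF : F ∈ Q) (hG : G ∈ Q) (h : leL F G) : simL F G := by
  have rightAdj_mem {K : OneMor C} (hK : K ∈ Q) : K.rightAdj ∈ Q :=
    hQ.1.mem_of_simLR hK (indec_iff_indecomposable.2 (indecomposable_of_adjunction
      (.ofIsLeftAdjoint K.mor) (indec_iff_indecomposable.1 (hQ.1.indecM hK)))) (simLR_rightAdj K)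
  exact ⟨h, leR_rightAdj_iff.1
    (hQ.simR_of_leR (rightAdj_mem hF) (rightAdj_mem hG) (leR_rightAdj_iff.2 h)).2⟩

theorem regular_left_and_right_cells_intersect_general
    [∀ {a b : C} (f : a ⟶ b), IsArtinianRing (End f)]
    {Q R L : Set (OneMor C)} (hQ : IsRegular Q) (hR : IsRightCell R) (hRQ : R ⊆ Q)
    (hL : IsLeftCell L) (hLQ : L ⊆ Q) : ∃ N : OneMor C, N ∈ L ∧ N ∈ R := by
  obtain ⟨F, hF, rfl⟩ := hR
  obtain ⟨G, hG, rfl⟩ := hL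
  have hFQ : F ∈ Q := hRQ ⟨hF, .refl F, .refl F⟩
  have hGQ : G ∈ Q := hLQ ⟨hG, .refl G, .refl G⟩
  obtain ⟨H₁, H₂, hsum⟩ := (hQ.1.simLR hFQ hGQ).1
  have := isLocalRing_end_of_indecomposable (indec_iff_indecomposable.1 hG)
  obtain ⟨Y, hY, hGY, hYX⟩ := exists_indecomposable_retract_map (precomp G.tgt H₁)
    (isSummand_iff_nonempty_retract.1 hsum).some
  let N : OneMor C := ⟨F.src, G.tgt, Y⟩
  have hN : IndecM N := indec_iff_indecomposable.2 hY
  have hFN : leR F N := ⟨rfl, H₂, isSummand_iff_nonempty_retract.2 hYX⟩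
  have hNG : leL N G := ⟨rfl, H₁, isSummand_iff_nonempty_retract.2 hGY⟩
  have hNQ : N ∈ Q :=
    hQ.1.mem_of_simLR hFQ hN ⟨hFN.leLR, hNG.leLR.trans (hQ.1.simLR hGQ hFQ).1⟩
  exact ⟨N, ⟨hN, (hQ.simL_of_leL hNQ hGQ hNG).symm⟩, hN, hQ.simR_of_leR hFQ hNQ hFN⟩

end Cells

namespace FiatAxioms

variable {k : Type*} [Field k] [IsAlgClosed k] [Bicategory.Strict C]
  [∀ a b : C, Preadditive (a ⟶ b)] [∀ a b : C, HasFiniteBiproducts (a ⟶ b)]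
  [∀ a b : C, Linear k (a ⟶ b)]

theorem isArtinianRing_end (S : FiatAxioms k C) {a b : C} (f : a ⟶ b) : IsArtinianRing (End f) :=
  have : FiniteDimensional k (End f) := S.finDim a b f f
  .of_finite k (End f)

theorem isLeftAdjoint (S : FiatAxioms k C) {a b : C} (f : a ⟶ b) : IsLeftAdjoint f :=
  .mk (S.adj f).some

theorem isRightAdjoint (S : FiatAxioms k C) {a b : C} (f : a ⟶ b) : IsRightAdjoint f :=
  .mk (adjunctionOfIsoRight (S.adj (S.star f)).some (S.starStar f).some)

end FiatAxioms

/-- In a fiat category, a right cell and a left cell inside the same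
regular two-sided cell have nonempty intersection. -/
theorem regular_left_and_right_cells_intersect
    (k : Type*) [Field k] [IsAlgClosed k]
    {C : Type u} [Bicategory.{w, v} C] [Bicategory.Strict C]
    [∀ a b : C, Preadditive (a ⟶ b)] [∀ a b : C, HasFiniteBiproducts (a ⟶ b)]
    [∀ a b : C, Linear k (a ⟶ b)]
    (S : FiatAxioms k C)
    (Q R L : Set (OneMor C)) (hQ : IsRegular Q)
    (hR : IsRightCell R) (hRQ : R ⊆ Q)
    (hL : IsLeftCell L) (hLQ : L ⊆ Q) :
    ∃ N : OneMor C, N ∈ L ∧ N ∈ R := by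
  have := S.idemComplete
  have {a b : C} (f : a ⟶ b) := S.isArtinianRing_end f
  have {a b : C} (f : a ⟶ b) := S.isLeftAdjoint f
  have {a b : C} (f : a ⟶ b) := S.isRightAdjoint f
  exact regular_left_and_right_cells_intersect_general hQ hR hRQ hL hLQ

end CellTwoRep
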